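/- arXiv:1009.3108 — 5 statements merged into one kernel-verified Lean document; each statement's English description precedes it below -/
import Mathlib

section
/- Let R be a commutative ring, A a commutative R-algebra, and g : A → A an R-algebra endomorphism, regarded as an R-linear endomorphism of A. Then for every s ≥ 1 and all a_1, …, a_s ∈ A, the s-fold iterated commutator ⁅…⁅⁅g, L_{a_s}⁆, L_{a_{s−1}}⁆, …, L_{a_1}⁆ in End_R(A) is equal to L_{(g(a_s) − a_s)·(g(a_{s−1}) − a_{s−1})⋯(g(a_1) − a_1)} ∘ g; that is, its value at any x ∈ A is (∏_{i=1}^s (g(a_i) − a_i)) · g(x). (This is the commutator identity of Theorem 5.0.4.) -/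
/-- Iterated commutator: `iterComm g [a₁, …, aₛ]` is the `s`-fold iterated commutator
`⁅…⁅⁅g, L_{aₛ}⁆, L_{aₛ₋₁}⁆, …, L_{a₁}⁆` in `End_R(A)`, where `L_a` is left
multiplication by `a`. -/
def iterComm {R A : Type*} [CommRing R] [CommRing A] [Algebra R A]
    (g : Module.End R A) : List A → Module.End R A
  | [] => g
  | a :: l => ⁅iterComm g l, (LinearMap.mulLeft R a : Module.End R A)⁆

/-- The identity over lists, by induction: `g (a * x) - a * g x = (g a - a) * g x`, so each further
commutator with `L_a` contributes the factor `g a - a`. -/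
theorem iterComm_algHom_list {R A : Type*} [CommRing R] [CommRing A] [Algebra R A]
    (g : A →ₐ[R] A) (l : List A) (x : A) :
    iterComm g.toLinearMap l x = (l.map fun b => g b - b).prod * g x := by
  induction l generalizing x with
  | nil => simp [iterComm]
  | cons b l ih =>
    simp only [iterComm, Ring.lie_def, LinearMap.sub_apply, Module.End.mul_apply,
      LinearMap.mulLeft_apply, ih, map_mul, List.map_cons, List.prod_cons]
    ring

/-- The commutator identity of Theorem 5.0.4: for an `R`-algebra endomorphism `g` of `A`,
the `s`-fold iterated commutator `⁅…⁅⁅g, L_{aₛ}⁆, …, L_{a₁}⁆` equals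
`L_{(g(aₛ)-aₛ)⋯(g(a₁)-a₁)} ∘ g`. -/
theorem iterComm_algHom_apply
    (R A : Type*) [CommRing R] [CommRing A] [Algebra R A]
    (g : A →ₐ[R] A) (s : ℕ) (hs : 1 ≤ s) (a : Fin s → A) (x : A) :
    iterComm g.toLinearMap (List.ofFn a) x = (∏ i, (g (a i) - a i)) * g x := by
  rw [iterComm_algHom_list, List.map_ofFn, List.prod_ofFn]
  rfl
end

section
/- Let R be a commutative ring, A and B commutative R-algebras, and u, v : A → B two R-algebra homomorphisms. Then for every s ≥ 1 and all a_1, …, a_s ∈ A, the s-fold iterated bracket ⁅…⁅⁅v, a_s⁆_u, a_{s−1}⁆_u, …, a_1⁆_u is equal to L_{(v(a_s) − u(a_s))⋯(v(a_1) − u(a_1))} ∘ v; that is, its value at any x ∈ A is (∏_{i=1}^s (v(a_i) − u(a_i))) · v(x). (This is the commutator identity of Theorem 5.0.6 for a pair of homomorphisms.) -/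
/-- Iterated bracket relative to an algebra homomorphism `u : A → B`:
`relIterComm u D [a₁, …, aₛ]` is `⁅…⁅⁅D, aₛ⁆_u, aₛ₋₁⁆_u, …, a₁⁆_u`, where
`⁅D, a⁆_u := D ∘ L_a - L_{u a} ∘ D`. -/
def relIterComm {R A B : Type*} [CommRing R] [CommRing A] [CommRing B]
    [Algebra R A] [Algebra R B] (u : A →ₐ[R] B) (D : A →ₗ[R] B) :
    List A → (A →ₗ[R] B)
  | [] => D
  | a :: l =>
      (relIterComm u D l).comp (LinearMap.mulLeft R a)
        - (LinearMap.mulLeft R (u a)).comp (relIterComm u D l)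

/-- The identity for an arbitrary list, the empty one included: by induction, bracketing
`L_c ∘ v` with `a` gives `x ↦ c * v (a * x) - u a * (c * v x)`, which is
`(v a - u a) * c * v x` because `v` is multiplicative. -/
theorem relIterComm_algHom_list {R A B : Type*} [CommRing R] [CommRing A] [CommRing B]
    [Algebra R A] [Algebra R B] (u v : A →ₐ[R] B) (l : List A) (x : A) :
    relIterComm u v.toLinearMap l x = (l.map fun b => v b - u b).prod * v x := by
  induction l generalizing x with
  | nil => simp [relIterComm]
  | cons b l ih =>
    simp only [relIterComm, LinearMap.sub_apply, LinearMap.comp_apply,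
      LinearMap.mulLeft_apply, ih, map_mul, List.map_cons, List.prod_cons]
    ring

/-- The commutator identity of Theorem 5.0.6 for a pair of algebra homomorphisms
`u, v : A → B`: the `s`-fold iterated bracket `⁅…⁅⁅v, aₛ⁆_u, …, a₁⁆_u` equals
`L_{(v(aₛ)-u(aₛ))⋯(v(a₁)-u(a₁))} ∘ v`. -/
theorem relIterComm_algHom_apply
    (R A B : Type*) [CommRing R] [CommRing A] [CommRing B]
    [Algebra R A] [Algebra R B]
    (u v : A →ₐ[R] B) (s : ℕ) (hs : 1 ≤ s) (a : Fin s → A) (x : A) :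
    relIterComm u v.toLinearMap (List.ofFn a) x
      = (∏ i, (v (a i) - u (a i))) * v x := by
  rw [relIterComm_algHom_list, List.map_ofFn, List.prod_ofFn]
  rfl
end

section
/- Let p be a prime and h, β natural numbers. Set q := β / p^h (integer division) and, for 0 ≤ j < h, let a_j := (β / p^j) % p be the j-th base-p digit of β, so that β = q·p^h + Σ_{j=0}^{h−1} a_j·p^j. Then padicValNat p (β!) = q · padicValNat p ((p^h)!) + Σ_{j=0}^{h−1} a_j · padicValNat p ((p^j)!) + padicValNat p (q!). (This is the exact factorial-valuation computation underlying the estimate in the proof of Proposition 7.1.10.) -/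
/-!
Both identities follow by induction on `h`, splitting off one more digit at each step:
`Q = β / pʰ` is `p * (Q / p) + a` with `a = Q % p`. Since the last digit does not affect the
valuation of the factorial, `v_p(Q!) = v_p((Q / p)!) + Q / p`. The step for the valuations then
reduces to the recursion `v_p((pʰ⁺¹)!) = p * v_p((pʰ)!) + 1`.
-/

theorem padicValNat_factorial_prime_pow_succ (p : ℕ) [Fact p.Prime] (h : ℕ) :
    padicValNat p (Nat.factorial (p ^ (h + 1)))
      = p * padicValNat p (Nat.factorial (p ^ h)) + 1 := by
  induction h with
  | zero =>
    have := padicValNat_factorial_mul (p := p) 1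
    simpa using this
  | succ h ih =>
    have h₁ := padicValNat_factorial_mul (p := p) (p ^ (h + 1))
    have h₀ := padicValNat_factorial_mul (p := p) (p ^ h)
    rw [← pow_succ'] at h₁ h₀
    calc padicValNat p (Nat.factorial (p ^ (h + 1 + 1)))
        = p * padicValNat p (Nat.factorial (p ^ h)) + 1 + p ^ (h + 1) := by rw [h₁, ih]
      _ = p * (padicValNat p (Nat.factorial (p ^ h)) + p ^ h) + 1 := by ring
      _ = p * padicValNat p (Nat.factorial (p ^ (h + 1))) + 1 := by rw [h₀]

theorem padicValNat_factorial_eq_div_add (p : ℕ) [Fact p.Prime] (n : ℕ) :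
    padicValNat p (Nat.factorial n) = padicValNat p (Nat.factorial (n / p)) + n / p := by
  rw [← padicValNat_mul_div_factorial, padicValNat_factorial_mul]

/-- The factorial-valuation computation underlying the estimate in the proof of
Proposition 7.1.10: writing `q := β / pʰ` and `aⱼ := (β / pʲ) % p` for `j < h`
(the base-`p` digits of `β`), one has `β = q·pʰ + ∑_{j<h} aⱼ·pʲ` and
`v_p(β!) = q·v_p((pʰ)!) + ∑_{j<h} aⱼ·v_p((pʲ)!) + v_p(q!)`. -/
theorem padicValNat_factorial_digit_decomposition
    (p : ℕ) (hp : p.Prime) (h β : ℕ) :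
    β = (β / p ^ h) * p ^ h + ∑ j ∈ Finset.range h, ((β / p ^ j) % p) * p ^ j ∧
    padicValNat p (Nat.factorial β)
      = (β / p ^ h) * padicValNat p (Nat.factorial (p ^ h))
        + ∑ j ∈ Finset.range h, ((β / p ^ j) % p) * padicValNat p (Nat.factorial (p ^ j))
        + padicValNat p (Nat.factorial (β / p ^ h)) := by
  have : Fact p.Prime := ⟨hp⟩
  induction h with
  | zero => simp
  | succ h ih =>
    obtain ⟨ih₁, ih₂⟩ := ih
    have hq : β / p ^ (h + 1) = β / p ^ h / p := by rw [pow_succ, Nat.div_div_eq_div_mul]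
    have hdiv := Nat.div_add_mod (β / p ^ h) p
    have hfac := padicValNat_factorial_eq_div_add p (β / p ^ h)
    rw [Finset.sum_range_succ, Finset.sum_range_succ, hq,
      padicValNat_factorial_prime_pow_succ]
    -- Keeps `rw [← hdiv]` from expanding `β / p ^ h` inside its own quotient and remainder.
    generalize β / p ^ h / p = q at *
    generalize β / p ^ h % p = a at *
    constructor
    · refine ih₁.trans ?_
      rw [← hdiv]
      ring
    · rw [ih₂, hfac, ← hdiv]
      ring
end

section
/- Let R be a commutative ring, I an ideal of R, and A a commutative R-algebra which, as an R-module, is I-adically complete and Hausdorff (IsAdicComplete I A). Then every R-algebra endomorphism g : A → A satisfying g(a) − a ∈ I·A for all a ∈ A is bijective, hence an R-algebra automorphism of A. In particular, the set of R-algebra endomorphisms of A reducing to the identity modulo I forms a group under composition. (This is the I-adically complete analogue of Proposition 4.1.4, asserting that the sheaf G of automorphisms reducing to the identity modulo I is a sheaf of groups; the paper notes that all such statements transpose to the complete, formal setting with simpler proofs.) -/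
/-!
Only the `R`-linear structure of `g` matters. Put `u = id - g`, an `R`-linear map with image in
`I • A`; by linearity `u ^ n` has image in `I ^ n • A`. The inverse of `g = id - u` is the geometric
series `∑ u ^ k`, which converges by completeness: if `L` is the limit of the partial sums
`∑_{k < n} u ^ k b`, then `g L - b` lies in every `I ^ n • A`, hence `g L = b`. If `g x = 0`
then `x = u x = u ^ n x` for all `n`, so `x = 0` by Hausdorffness.
-/

lemma pow_apply_mem_pow_smul_top {R M : Type*} [CommRing R] [AddCommGroup M] [Module R M]
    (I : Ideal R) (u : Module.End R M) (hu : ∀ x, u x ∈ I • (⊤ : Submodule R M))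
    (n : ℕ) (x : M) : (u ^ n) x ∈ I ^ n • (⊤ : Submodule R M) := by
  induction n generalizing x with
  | zero => simp
  | succ n ih =>
    have h : Submodule.map (u ^ n) (I • ⊤) ≤ I ^ (n + 1) • (⊤ : Submodule R M) := by
      rw [Submodule.map_smul'', pow_succ', Submodule.mul_smul]
      refine smul_mono_right _ ?_
      rintro _ ⟨y, -, rfl⟩
      exact ih y
    rw [pow_succ u, Module.End.mul_apply]
    exact h (Submodule.mem_map_of_mem (hu x))

lemma LinearMap.bijective_of_sub_id_mem_smul {R M : Type*} [CommRing R] [AddCommGroup M]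
    [Module R M] (I : Ideal R) [IsAdicComplete I M] (g : Module.End R M)
    (hg : ∀ x, g x - x ∈ I • (⊤ : Submodule R M)) : Function.Bijective g := by
  obtain ⟨u, rfl⟩ : ∃ u, g = 1 - u := ⟨1 - g, by simp⟩
  have hu : ∀ x, u x ∈ I • (⊤ : Submodule R M) := fun x => by simpa using hg x
  have hpow := pow_apply_mem_pow_smul_top I u hu
  constructor
  · rw [injective_iff_map_eq_zero]
    intro x hx
    have hx' : u x = x := (sub_eq_zero.mp hx).symm
    refine IsHausdorff.haus (I := I) inferInstance x fun n => ?_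
    have hfix : (u ^ n) x = x := by
      rw [Module.End.pow_apply]
      exact Function.iterate_fixed hx' n
    rw [SModEq.zero, ← hfix]
    exact hpow n x
  · intro b
    obtain ⟨L, hL⟩ := IsPrecomplete.prec (I := I) (M := M) inferInstance
      (f := fun n => (∑ k ∈ Finset.range n, u ^ k) b) (by
        intro m n hmn
        rw [SModEq.comm, SModEq.sub_mem, ← LinearMap.sub_apply,
          ← Finset.sum_Ico_eq_sub _ hmn, LinearMap.sum_apply]
        refine Submodule.sum_mem _ fun k hk => ?_
        exact Submodule.pow_smul_top_le I M (Finset.mem_Ico.mp hk).1 (hpow k b))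
    refine ⟨L, (IsHausdorff.eq_iff_smodEq (I := I)).mpr fun n => ?_⟩
    -- The truncated geometric series inverts `1 - u` up to `u ^ n`.
    have hgeom : (1 - u) ((∑ k ∈ Finset.range n, u ^ k) b) = b - (u ^ n) b := by
      rw [← Module.End.mul_apply, mul_neg_geom_sum]
      simp
    have hmap : (1 - u) ((∑ k ∈ Finset.range n, u ^ k) b - L) ∈ I ^ n • (⊤ : Submodule R M) := by
      have h : Submodule.map (1 - u) (I ^ n • ⊤) ≤ I ^ n • (⊤ : Submodule R M) := by
        rw [Submodule.map_smul'']
        exact smul_mono_right _ le_top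
      exact h (Submodule.mem_map_of_mem (SModEq.sub_mem.mp (hL n)))
    rw [map_sub, hgeom] at hmap
    rw [SModEq.comm, SModEq.sub_mem]
    have := Submodule.add_mem _ hmap (hpow n b)
    rwa [show ∀ y z w : M, y - z - w + z = y - w from fun y z w => by abel] at this

/-- The `I`-adically complete analogue of Proposition 4.1.4: if `A` is an `I`-adically
complete and Hausdorff `R`-algebra, then every `R`-algebra endomorphism of `A` reducing
to the identity modulo `I` is bijective, hence an automorphism; in particular such
endomorphisms form a group. -/
theorem bijective_of_sub_id_mem_smul_of_isAdicComplete
    (R A : Type*) [CommRing R] [CommRing A] [Algebra R A]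
    (I : Ideal R) [IsAdicComplete I A]
    (g : A →ₐ[R] A) (hg : ∀ a : A, g a - a ∈ I • (⊤ : Submodule R A)) :
    Function.Bijective g := by
  exact LinearMap.bijective_of_sub_id_mem_smul I g.toLinearMap hg
end

section
/- Let R be a commutative ring, π ∈ R, and let A, B be commutative R-algebras. Assume that A, as an R-module, is (π)-adically complete and Hausdorff (IsAdicComplete (π) A), that B is (π)-adically Hausdorff (⋂_n π^n·B = 0), and that π is a non-zero-divisor on B (π·b = 0 implies b = 0). If u : A → B is an R-algebra homomorphism whose reduction modulo π, A/πA → B/πB, is bijective, then u is bijective. (This is the adically complete analogue of Theorem 2.2.10: a morphism of flat adic lifts which is an isomorphism modulo the ideal is an isomorphism.) -/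
/-!
Surjectivity is the successive approximation argument: a linear map from a precomplete module to a
Hausdorff one is surjective once it is so modulo the ideal
(`surjective_of_mkQ_comp_surjective`).

For injectivity, let `u a = 0`. Injectivity modulo `π` gives `a = π a'`, and then `π (u a') = 0`
forces `u a' = 0` because `π` is a non-zero-divisor on `B`. Iterating, `a` is divisible by every
power of `π` (`exists_eq_pow_smul_of_map_eq_zero`), hence vanishes since `A` is Hausdorff.
-/

/-- The reduction of `u : A →ₐ[R] B` modulo `π`, as a ring homomorphism
`A ⧸ πA →+* B ⧸ πB`. -/
def redMod {R A B : Type*} [CommRing R] [CommRing A] [CommRing B]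
    [Algebra R A] [Algebra R B] (π : R) (u : A →ₐ[R] B) :
    A ⧸ Ideal.span {algebraMap R A π} →+* B ⧸ Ideal.span {algebraMap R B π} :=
  Ideal.quotientMap (Ideal.span {algebraMap R B π}) (u : A →+* B)
    (by
      rw [Ideal.span_le, Set.singleton_subset_iff]
      simp [Ideal.mem_comap, u.commutes, Ideal.mem_span_singleton])

/-- The iterated form of `ker u = π ker u`. -/
theorem exists_eq_pow_smul_of_map_eq_zero
    {R A B : Type*} [CommRing R] [CommRing A] [CommRing B]
    [Algebra R A] [Algebra R B] {π : R}
    (hreg : ∀ b : B, π • b = 0 → b = 0) {u : A →ₐ[R] B}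
    (hinj : Function.Injective (redMod π u)) (n : ℕ) :
    ∀ a : A, u a = 0 → ∃ c : A, a = π ^ n • c := by
  induction n with
  | zero => exact fun a _ => ⟨a, by simp⟩
  | succ n ih =>
    intro a ha
    have hmk : Ideal.Quotient.mk (Ideal.span {algebraMap R A π}) a = 0 := by
      apply hinj
      rw [map_zero]
      change Ideal.Quotient.mk _ (u a) = 0
      rw [ha, map_zero]
    rw [Ideal.Quotient.eq_zero_iff_mem, Ideal.mem_span_singleton] at hmk
    obtain ⟨a', rfl⟩ := hmk
    rw [← Algebra.smul_def] at ha ⊢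
    rw [map_smul] at ha
    obtain ⟨c, rfl⟩ := ih a' (hreg _ ha)
    exact ⟨c, by rw [smul_smul, pow_succ']⟩

/-- The adically complete analogue of Theorem 2.2.10: if `A` is `(π)`-adically complete
and Hausdorff, `B` is `(π)`-adically Hausdorff, `π` is a non-zero-divisor on `B`, and the
reduction of `u : A → B` modulo `π` is bijective, then `u` is bijective. -/
theorem bijective_of_bijective_redMod
    (R A B : Type*) [CommRing R] [CommRing A] [CommRing B]
    [Algebra R A] [Algebra R B] (π : R)
    [IsAdicComplete (Ideal.span {π}) A] [IsHausdorff (Ideal.span {π}) B]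
    (hreg : ∀ b : B, π • b = 0 → b = 0)
    (u : A →ₐ[R] B)
    (hbij : Function.Bijective (redMod π u)) :
    Function.Bijective u := by
  constructor
  · rw [injective_iff_map_eq_zero]
    intro a ha
    refine IsHausdorff.haus (I := Ideal.span {π}) inferInstance a fun n => ?_
    obtain ⟨c, hc⟩ := exists_eq_pow_smul_of_map_eq_zero hreg hbij.1 n a ha
    rw [SModEq.zero, hc]
    exact Submodule.smul_mem_smul
      (Ideal.pow_mem_pow (Ideal.mem_span_singleton_self π) n) Submodule.mem_top
  · refine surjective_of_mkQ_comp_surjective (I := Ideal.span {π}) (f := u.toLinearMap) ?_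
    intro y
    obtain ⟨b, rfl⟩ := Submodule.mkQ_surjective _ y
    obtain ⟨q, hq⟩ := hbij.2 (Ideal.Quotient.mk _ b)
    obtain ⟨a, rfl⟩ := Ideal.Quotient.mk_surjective q
    change Ideal.Quotient.mk _ (u a) = _ at hq
    rw [Ideal.Quotient.eq, Ideal.mem_span_singleton] at hq
    obtain ⟨c, hc⟩ := hq
    refine ⟨a, (Submodule.Quotient.eq _).2 ?_⟩
    change u a - b ∈ _
    rw [hc, ← Algebra.smul_def]
    exact Submodule.smul_mem_smul (Ideal.mem_span_singleton_self π) Submodule.mem_top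
end
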